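/- arXiv:2003.03723 — 4 statements merged into one kernel-verified Lean document; each statement's English description precedes it below -/
import Mathlib

section
/- Let V be a finite nonempty type, E : Finset (V × V) a directed road network, S a finite set of terminals in V with at least two elements, and R_S the set of all ordered pairs (s, s') of distinct terminals of S. Then for every Q* ⊆ E: Q* is a directed multiway cut for S if and only if f*(E \ Q*, R_S) = 0. (This is the correctness of the reduction from Minimum Multiway Cut used in the NP-completeness proofs of the problem of Maximizing Disruption.) -/
open scoped ENNReal

/-- A directed walk of length `n` from `s` to `t` using only edges in `A`. -/
def IsDirWalk {V : Type*} (A : Finset (V × V)) (s t : V) (n : ℕ) : Prop :=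
  ∃ f : ℕ → V, f 0 = s ∧ f n = t ∧ ∀ i < n, (f i, f (i + 1)) ∈ A

/-- The directed distance `d_A(s,t)` in `ℝ≥0∞`: the infimum of lengths of
directed walks from `s` to `t` in `A` (`∞` if there is no such walk). -/
noncomputable def dDist {V : Type*} (A : Finset (V × V)) (s t : V) : ℝ≥0∞ :=
  sInf {x : ℝ≥0∞ | ∃ n : ℕ, IsDirWalk A s t n ∧ x = (n : ℝ≥0∞)}

/-- The traffic-quality objective `f*` under the simple traffic model `M∅`. -/
noncomputable def fStar {V : Type*} (A : Finset (V × V)) (R : Finset (V × V)) : ℝ≥0∞ :=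
  (R.card : ℝ≥0∞)⁻¹ * ∑ p ∈ R, (dDist A p.1 p.2)⁻¹

/-- The ride set `R_S`: all ordered pairs of distinct terminals of `S`. -/
def ridesOf {V : Type*} [DecidableEq V] (S : Finset V) : Finset (V × V) :=
  (S ×ˢ S).filter fun p => p.1 ≠ p.2

/-- `F` is a directed multiway cut for the terminal set `S` in the network `E`:
in `E \ F` there is no directed walk between any two distinct terminals. -/
def IsDirMultiwayCut {V : Type*} [DecidableEq V] (E F : Finset (V × V)) (S : Finset V) : Prop :=
  ∀ s ∈ S, ∀ s' ∈ S, s ≠ s' → ∀ n : ℕ, ¬ IsDirWalk (E \ F) s s' n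

/-- `F` is a directed multicut for the set `P` of source–destination pairs in `E`:
in `E \ F` there is no directed walk from `s` to `t` for any `(s,t) ∈ P`. -/
def IsDirMulticut {V : Type*} [DecidableEq V] (E F : Finset (V × V)) (P : Finset (V × V)) : Prop :=
  ∀ p ∈ P, ∀ n : ℕ, ¬ IsDirWalk (E \ F) p.1 p.2 n

theorem stmt_3 {V : Type*} [Fintype V] [Nonempty V] [DecidableEq V]
    (E : Finset (V × V)) (S : Finset V) (hS : 2 ≤ S.card)
    (Qstar : Finset (V × V)) (hQ : Qstar ⊆ E) :
    IsDirMultiwayCut E Qstar S ↔ fStar (E \ Qstar) (ridesOf S) = 0 := by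
  have key : ∀ s t : V, (dDist (E \ Qstar) s t)⁻¹ = 0 ↔ ∀ n : ℕ, ¬ IsDirWalk (E \ Qstar) s t n := by
    intro s t
    rw [ENNReal.inv_eq_zero, dDist, sInf_eq_top]
    constructor
    · intro h n hn
      exact ENNReal.natCast_ne_top n (h _ ⟨n, hn, rfl⟩)
    · rintro h x ⟨n, hn, _⟩
      exact absurd hn (h n)
  have hc : ((ridesOf S).card : ℝ≥0∞)⁻¹ ≠ 0 :=
    ENNReal.inv_ne_zero.2 (ENNReal.natCast_ne_top _)
  rw [fStar, mul_eq_zero, or_iff_right hc, Finset.sum_eq_zero_iff]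
  constructor
  · rintro h ⟨s, t⟩ hp
    simp only [ridesOf, Finset.mem_filter, Finset.mem_product] at hp
    exact (key s t).2 (h s hp.1.1 t hp.1.2 hp.2)
  · intro h s hs t ht hst
    refine (key s t).1 (h (s, t) ?_)
    simp only [ridesOf, Finset.mem_filter, Finset.mem_product]
    exact ⟨⟨hs, ht⟩, hst⟩
end

section
/- Let V be a finite nonempty type, E : Finset (V × V) a directed road network, S a finite set of terminals in V with at least two elements, R_S the set of all ordered pairs (s, s') of distinct terminals of S, and b ∈ ℕ a budget. Then there exists Q' ⊆ E with |Q'| ≤ b and f*(E \ Q', R_S) = 0 if and only if there exists a directed multiway cut F ⊆ E for S with |F| ≤ b. (This is the equivalence between the decision version of the problem of Maximizing Disruption with attack efficiency ξ = 0 and the Minimum Multiway Cut decision problem.) -/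
open scoped ENNReal

theorem stmt_4 {V : Type*} [Fintype V] [Nonempty V] [DecidableEq V]
    (E : Finset (V × V)) (S : Finset V) (hS : 2 ≤ S.card) (b : ℕ) :
    (∃ Q' ⊆ E, Q'.card ≤ b ∧ fStar (E \ Q') (ridesOf S) = 0) ↔
    (∃ F ⊆ E, F.card ≤ b ∧ IsDirMultiwayCut E F S) := by
  have key : ∀ A : Finset (V × V), ∀ s t : V, (dDist A s t)⁻¹ = 0 ↔ ∀ n, ¬ IsDirWalk A s t n := by
    intro A s t
    rw [ENNReal.inv_eq_zero, dDist, sInf_eq_top]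
    constructor
    · intro h n hn
      exact ENNReal.natCast_ne_top n (h _ ⟨n, hn, rfl⟩)
    · rintro h x ⟨n, hn, rfl⟩
      exact absurd hn (h n)
  refine exists_congr fun F => and_congr_right fun _ => and_congr_right fun _ => ?_
  unfold fStar IsDirMultiwayCut
  rw [mul_eq_zero, or_iff_right (ENNReal.inv_ne_zero.mpr (ENNReal.natCast_ne_top _)),
    Finset.sum_eq_zero_iff]
  simp only [key, ridesOf, Finset.mem_filter, Finset.mem_product]
  constructor
  · intro h s hs s' hs' hne
    exact h (s, s') ⟨⟨hs, hs'⟩, hne⟩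
  · rintro h ⟨s, s'⟩ ⟨⟨hs, hs'⟩, hne⟩
    exact h s hs s' hs' hne
end

section
/- Let V be a finite nonempty type, E : Finset (V × V) a directed road network, and P a nonempty finite set of source–destination pairs (s, t) ∈ V × V with s ≠ t for each pair. Then for every Q' ⊆ E: f*(E \ Q', P) = 0 if and only if Q' is a directed multicut for P. (This is the correctness of the L-reduction from Minimum Multi-Cut used in the APX-hardness proof of the problem of Minimizing Targets.) -/
open scoped ENNReal

theorem stmt_5 {V : Type*} [Fintype V] [Nonempty V] [DecidableEq V]
    (E : Finset (V × V)) (P : Finset (V × V)) (hP : P.Nonempty)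
    (hst : ∀ p ∈ P, p.1 ≠ p.2)
    (Q' : Finset (V × V)) (hQ : Q' ⊆ E) :
    fStar (E \ Q') P = 0 ↔ IsDirMulticut E Q' P := by
  have key : ∀ p : V × V, (dDist (E \ Q') p.1 p.2)⁻¹ = 0 ↔
      ∀ n : ℕ, ¬ IsDirWalk (E \ Q') p.1 p.2 n := by
    intro p
    rw [ENNReal.inv_eq_zero, dDist, sInf_eq_top]
    constructor
    · intro h n hn
      exact ENNReal.natCast_ne_top n (h _ ⟨n, hn, rfl⟩)
    · rintro h x ⟨n, hn, -⟩
      exact absurd hn (h n)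
  unfold fStar IsDirMulticut
  rw [mul_eq_zero, Finset.sum_eq_zero_iff]
  have hc : ((P.card : ℝ≥0∞)⁻¹ = 0) ↔ False := by
    simp
  rw [hc, false_or]
  exact forall₂_congr fun p _ => key p
end

section
/- Let V be a finite nonempty type, E : Finset (V × V) a directed road network, and P a nonempty finite set of source–destination pairs (s, t) ∈ V × V with s ≠ t for each pair. Then the minimum cardinality of an edge set Q' ⊆ E with f*(E \ Q', P) = 0 equals the minimum cardinality of a directed multicut F ⊆ E for P; moreover both minima are attained, since the full edge set E itself is a directed multicut for P. (This is the statement that an optimal solution to the constructed instance of the problem of Minimizing Targets with ξ = 0 has the same size as an optimal Minimum Multi-Cut solution.) -/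
open scoped ENNReal

theorem fStar_zero_iff {V : Type*} [DecidableEq V] (E F P : Finset (V × V)) :
    fStar (E \ F) P = 0 ↔ IsDirMulticut E F P := by
  unfold fStar IsDirMulticut
  rw [mul_eq_zero, or_iff_right (ENNReal.inv_ne_zero.mpr (ENNReal.natCast_ne_top _)),
    Finset.sum_eq_zero_iff]
  refine forall₂_congr fun p _ => ?_
  rw [ENNReal.inv_eq_zero, dDist, sInf_eq_top]
  constructor
  · intro h n hn
    exact ENNReal.natCast_ne_top n (h _ ⟨n, hn, rfl⟩)
  · rintro h x ⟨n, hn, -⟩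
    exact absurd hn (h n)

theorem stmt_6 {V : Type*} [Fintype V] [Nonempty V] [DecidableEq V]
    (E : Finset (V × V)) (P : Finset (V × V)) (hP : P.Nonempty)
    (hst : ∀ p ∈ P, p.1 ≠ p.2) :
    IsDirMulticut E E P ∧
    sInf {n : ℕ | ∃ Q' ⊆ E, Q'.card = n ∧ fStar (E \ Q') P = 0} =
      sInf {n : ℕ | ∃ F ⊆ E, F.card = n ∧ IsDirMulticut E F P} ∧
    sInf {n : ℕ | ∃ Q' ⊆ E, Q'.card = n ∧ fStar (E \ Q') P = 0} ∈
      {n : ℕ | ∃ Q' ⊆ E, Q'.card = n ∧ fStar (E \ Q') P = 0} ∧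
    sInf {n : ℕ | ∃ F ⊆ E, F.card = n ∧ IsDirMulticut E F P} ∈
      {n : ℕ | ∃ F ⊆ E, F.card = n ∧ IsDirMulticut E F P} := by
  have hE : IsDirMulticut E E P := by
    rintro p hp n ⟨f, h0, hn, hf⟩
    rcases Nat.eq_zero_or_pos n with rfl | hpos
    · exact hst p hp (h0.symm.trans hn)
    · have := hf 0 hpos
      simp at this
  simp only [fStar_zero_iff]
  have hne : {n : ℕ | ∃ F ⊆ E, F.card = n ∧ IsDirMulticut E F P}.Nonempty :=
    ⟨E.card, E, Finset.Subset.refl E, rfl, hE⟩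
  exact ⟨hE, trivial, Nat.sInf_mem hne, Nat.sInf_mem hne⟩
end
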